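/- arXiv:2209.11733 — 5 statements merged into one kernel-verified Lean document; each statement's English description precedes it below -/
import Mathlib

section
/- Let λ > 0 and let (a_n) be a sequence of positive reals with a_n/n → λ. For every fixed positive integer k, the pushforward of the normalized Lebesgue (uniform probability) measure on the simplex Σ_n(a_n) = {y ∈ ℝ^n : y_1, …, y_n ≥ 0, y_1 + … + y_n ≤ a_n} under the projection y ↦ (y_1, …, y_k) converges weakly, as n → ∞, to the k-fold product of the exponential distribution with mean λ (density λ⁻¹ e^{−t/λ} on [0, ∞)). -/
open MeasureTheory Filter Topology

/-- The exponential distribution with mean `lam`: density `lam⁻¹ * exp (-t/lam)` for `t ≥ 0`. -/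
noncomputable def expMeasure (lam : ℝ) : Measure ℝ :=
  volume.withDensity fun t => ENNReal.ofReal (if 0 ≤ t then lam⁻¹ * Real.exp (-t / lam) else 0)

/-- The normalized Lebesgue measure on the simplex
`Σ_n(a) = {y ∈ ℝ^n : y_i ≥ 0, ∑ y_i ≤ a}`. -/
noncomputable def simplexMeasure (n : ℕ) (a : ℝ) : Measure (Fin n → ℝ) :=
  (volume {y : Fin n → ℝ | (∀ i, 0 ≤ y i) ∧ ∑ i, y i ≤ a})⁻¹ •
    volume.restrict {y : Fin n → ℝ | (∀ i, 0 ≤ y i) ∧ ∑ i, y i ≤ a}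


def SS (n : ℕ) (a : ℝ) : Set (Fin n → ℝ) := {y : Fin n → ℝ | (∀ i, 0 ≤ y i) ∧ ∑ i, y i ≤ a}

lemma SS_meas (n : ℕ) (a : ℝ) : MeasurableSet (SS n a) := by
  have h1 : IsClosed (SS n a) := by
    unfold SS
    have : {y : Fin n → ℝ | (∀ i, 0 ≤ y i) ∧ ∑ i, y i ≤ a}
        = (⋂ i, {y : Fin n → ℝ | 0 ≤ y i}) ∩ {y | ∑ i, y i ≤ a} := by
      ext y; simp
    rw [this]
    refine (isClosed_iInter fun i => isClosed_le (by fun_prop) (by fun_prop)).inter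
      (isClosed_le (by fun_prop) (by fun_prop))
  exact h1.measurableSet

lemma SS_neg (n : ℕ) (a : ℝ) (ha : a < 0) : SS n a = ∅ := by
  ext y
  simp only [SS, Set.mem_ofPred_eq, Set.mem_empty_iff_false, iff_false, not_and, not_le]
  intro h
  exact ha.trans_le (Finset.sum_nonneg fun i _ => h i)

lemma SS_vol (n : ℕ) : ∀ a : ℝ, 0 ≤ a →
    volume (SS n a) = ENNReal.ofReal (a ^ n / n.factorial) := by
  induction n with
  | zero =>
    intro a ha
    have : SS 0 a = Set.univ := by ext y; simp [SS, ha]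
    rw [this]; simp [volume_pi]
  | succ n ih =>
    intro a ha
    have hp := (volume_preserving_piFinSuccAbove (fun _ : Fin (n+1) => ℝ) 0).symm
    rw [← hp.measure_preimage (SS_meas _ _).nullMeasurableSet]
    rw [Measure.volume_eq_prod, Measure.prod_apply (hp.measurable (SS_meas _ _))]
    have key : ∀ t : ℝ, volume (Prod.mk t ⁻¹' ((MeasurableEquiv.piFinSuccAbove
        (fun _ : Fin (n+1) => ℝ) 0).symm ⁻¹' SS (n+1) a))
        = (Set.Icc 0 a).indicator (fun t => ENNReal.ofReal ((a - t) ^ n / n.factorial)) t := by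
      intro t
      have e : (Prod.mk t ⁻¹' ((MeasurableEquiv.piFinSuccAbove
        (fun _ : Fin (n+1) => ℝ) 0).symm ⁻¹' SS (n+1) a)) = {y | 0 ≤ t ∧ y ∈ SS n (a - t)} := by
        ext y
        simp [SS, Fin.insertNthEquiv, Fin.forall_fin_succ, Fin.sum_univ_succ, and_assoc,
          le_sub_iff_add_le']
      rw [e]
      by_cases h : t ∈ Set.Icc 0 a
      · rw [Set.indicator_of_mem h, ← ih _ (by linarith [h.2])]
        congr 1; ext y; simp [h.1]
      · rw [Set.indicator_of_notMem h]
        by_cases h0 : 0 ≤ t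
        · have : a < t := by
            by_contra hh
            exact h ⟨h0, not_lt.1 hh⟩
          rw [SS_neg _ _ (by linarith)]; simp
        · simp [h0]
    erw [lintegral_congr key]
    rw [lintegral_indicator measurableSet_Icc, ← ofReal_integral_eq_lintegral_ofReal]
    · congr 1
      rw [integral_Icc_eq_integral_Ioc, ← intervalIntegral.integral_of_le ha]
      rw [intervalIntegral.integral_comp_sub_left (fun x => x ^ n / (n.factorial : ℝ)) a]
      rw [intervalIntegral.integral_div, integral_pow]
      simp [Nat.factorial_succ]
      field_simp
    · exact (Continuous.integrableOn_Icc (by fun_prop))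
    · filter_upwards [ae_restrict_mem measurableSet_Icc] with t ht
      have : 0 ≤ a - t := by linarith [ht.2]
      simp only [Pi.zero_apply]
      positivity

lemma SS_real (n : ℕ) (a : ℝ) :
    volume.real (SS n a) = if 0 ≤ a then a ^ n / n.factorial else 0 := by
  split_ifs with h
  · rw [measureReal_def, SS_vol n a h, ENNReal.toReal_ofReal (by positivity)]
  · rw [SS_neg n a (not_le.1 h)]; simp

lemma pi_exp (k : ℕ) (lam : ℝ) (hlam : 0 < lam) (f : (Fin k → ℝ) → ℝ) :
    Integrable (fun t : ℝ => if 0 ≤ t then lam⁻¹ * Real.exp (-t / lam) else 0) ∧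
    ∫ x, f x ∂ (Measure.pi fun _ : Fin k => expMeasure lam)
      = ∫ x, (∏ i, if 0 ≤ x i then lam⁻¹ * Real.exp (-x i / lam) else 0) * f x := by
  set d : ℝ → ℝ := fun t : ℝ => if 0 ≤ t then lam⁻¹ * Real.exp (-t / lam) else 0 with hd
  have hdm : Measurable d := by
    refine Measurable.ite measurableSet_Ici (by fun_prop) (by fun_prop)
  have hd0 : ∀ t, 0 ≤ d t := by
    intro t; simp only [hd]; split_ifs <;> positivity
  have hdi : Integrable d := by
    have : d = (Set.Ici 0).indicator (fun t => lam⁻¹ * Real.exp (-lam⁻¹ * t)) := by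
      ext t; simp only [hd, Set.indicator, Set.mem_Ici]; congr 3; field_simp
    rw [this, integrable_indicator_iff measurableSet_Ici, integrableOn_Ici_iff_integrableOn_Ioi]
    exact (exp_neg_integrableOn_Ioi 0 (inv_pos.2 hlam)).const_mul _
  refine ⟨hdi, ?_⟩
  have hfin : IsFiniteMeasure (expMeasure lam) := isFiniteMeasure_withDensity_ofReal hdi.2
  have hpi : (Measure.pi fun _ : Fin k => expMeasure lam)
      = volume.withDensity (fun x : Fin k → ℝ => ENNReal.ofReal (∏ i, d (x i))) := by
    refine Measure.pi_eq fun s hs => ?_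
    rw [withDensity_apply _ (MeasurableSet.univ_pi hs), volume_pi, Measure.restrict_pi_pi,
      ← ofReal_integral_eq_lintegral_ofReal, integral_fintype_prod_eq_prod (fun _ => d),
      ENNReal.ofReal_prod_of_nonneg]
    · refine Finset.prod_congr rfl fun i _ => ?_
      rw [expMeasure, withDensity_apply _ (hs i), ofReal_integral_eq_lintegral_ofReal]
      · exact hdi.integrableOn
      · exact Eventually.of_forall hd0
    · intro i _; exact integral_nonneg hd0
    · exact Integrable.fintype_prod (f := fun _ => d) fun i => hdi.integrableOn
    · exact Eventually.of_forall fun x => Finset.prod_nonneg fun i _ => hd0 _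
  rw [hpi, integral_withDensity_eq_integral_toReal_smul (by fun_prop)
    (Eventually.of_forall fun x => ENNReal.ofReal_lt_top)]
  refine integral_congr_ae (Eventually.of_forall fun x => ?_)
  simp only [smul_eq_mul]
  rw [ENNReal.toReal_ofReal (Finset.prod_nonneg fun i _ => hd0 _)]

lemma split_pres (k m : ℕ) : ∃ e : ((Fin k → ℝ) × (Fin m → ℝ)) ≃ᵐ (Fin (k + m) → ℝ),
    MeasurePreserving e volume volume ∧ (∀ z i, e z (Fin.castAdd m i) = z.1 i) ∧
    (∀ z i, e z (Fin.natAdd k i) = z.2 i) := by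
  refine ⟨(MeasurableEquiv.sumPiEquivProdPi (fun _ : Fin k ⊕ Fin m => ℝ)).symm.trans
    (MeasurableEquiv.piCongrLeft (fun _ => ℝ) finSumFinEquiv), ?_, ?_, ?_⟩
  · exact (volume_measurePreserving_piCongrLeft (fun _ => ℝ) finSumFinEquiv).comp
      (volume_measurePreserving_sumPiEquivProdPi_symm _)
  · intro z i
    exact Equiv.piCongrLeft_sumInl (fun _ => ℝ) finSumFinEquiv z.1 z.2 i
  · intro z i
    exact Equiv.piCongrLeft_sumInr (fun _ => ℝ) finSumFinEquiv z.1 z.2 i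

lemma marg (k n : ℕ) (hkn : k ≤ n) (a : ℝ) (ha : 0 < a)
    (f : BoundedContinuousFunction (Fin k → ℝ) ℝ) :
    ∫ y, f (fun i : Fin k => if h : (i : ℕ) < n then y ⟨i, h⟩ else 0) ∂ simplexMeasure n a
    = ∫ x, (if (∀ i, 0 ≤ x i) ∧ ∑ i, x i ≤ a then
        (n.descFactorial k : ℝ) / a ^ k * (1 - (∑ i, x i) / a) ^ (n - k) else 0) * f x := by
  obtain ⟨m, rfl⟩ := Nat.exists_eq_add_of_le hkn
  obtain ⟨e, he, he1, he2⟩ := split_pres k m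
  have hproj : ∀ z, (fun i : Fin k => if h : (i : ℕ) < k + m then e z ⟨i, h⟩ else 0) = z.1 := by
    intro z; ext i
    rw [dif_pos (by omega), ← he1 z i]; rfl
  have hmem : ∀ z, e z ∈ SS (k + m) a ↔ (∀ i, 0 ≤ z.1 i) ∧ z.2 ∈ SS m (a - ∑ i, z.1 i) := by
    intro z
    simp only [SS, Set.mem_ofPred_eq, Fin.sum_univ_add, Fin.forall_fin_add, he1, he2, and_assoc,
      le_sub_iff_add_le']
  change ∫ y, _ ∂ ((volume (SS (k+m) a))⁻¹ • volume.restrict (SS (k+m) a)) = _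
  have hfinS : volume (SS (k+m) a) ≠ ⊤ := by
    rw [SS_vol _ _ ha.le]; exact ENNReal.ofReal_ne_top
  have hint : Integrable (fun z : (Fin k → ℝ) × (Fin m → ℝ) =>
      (e ⁻¹' SS (k+m) a).indicator (fun z => f z.1) z) (volume.prod volume) := by
    rw [integrable_indicator_iff (e.measurable (SS_meas _ _))]
    refine Measure.integrableOn_of_bounded (M := ‖f‖) ?_ ?_ ?_
    · rw [← Measure.volume_eq_prod, he.measure_preimage (SS_meas _ _).nullMeasurableSet]
      exact hfinS
    · exact (f.continuous.comp continuous_fst).aestronglyMeasurable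
    · exact Eventually.of_forall fun z => f.norm_coe_le_norm _
  rw [integral_smul_measure, ← integral_indicator (SS_meas _ _), ← he.integral_comp',
    Measure.volume_eq_prod]
  have h1 : ∀ z, (SS (k+m) a).indicator
      (fun y => f (fun i : Fin k => if h : (i : ℕ) < k + m then y ⟨i, h⟩ else 0)) (e z)
      = (e ⁻¹' SS (k+m) a).indicator (fun z => f z.1) z := by
    intro z
    classical
    rw [Set.indicator_apply, Set.indicator_apply, hproj]; rfl
  simp_rw [h1]
  rw [integral_prod _ hint, smul_eq_mul, ← integral_const_mul]
  refine integral_congr_ae (Eventually.of_forall fun x => ?_)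
  simp only
  have h2 : ∀ y, (e ⁻¹' SS (k+m) a).indicator (fun z => f z.1) (x, y)
      = (if (∀ i, 0 ≤ x i) then 1 else 0) * (SS m (a - ∑ i, x i)).indicator (fun _ => f x) y := by
    intro y
    classical
    rw [Set.indicator_apply, Set.indicator_apply]
    have hm : (x, y) ∈ e ⁻¹' SS (k+m) a ↔ (∀ i, 0 ≤ x i) ∧ y ∈ SS m (a - ∑ i, x i) := hmem (x, y)
    by_cases h : ∀ i, 0 ≤ x i <;> by_cases h' : y ∈ SS m (a - ∑ i, x i)
    · rw [if_pos (hm.2 ⟨h, h'⟩), if_pos h, if_pos h', one_mul]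
    · rw [if_neg (fun q => h' (hm.1 q).2), if_neg h', mul_zero]
    · rw [if_neg (fun q => h (hm.1 q).1), if_neg h, zero_mul]
    · rw [if_neg (fun q => h (hm.1 q).1), if_neg h, zero_mul]
  simp_rw [h2]
  rw [integral_const_mul, integral_indicator (SS_meas _ _), setIntegral_const, SS_real,
    ENNReal.toReal_inv, ← measureReal_def, SS_real, if_pos ha.le]
  by_cases h : ∀ i, 0 ≤ x i
  swap
  · simp [h]
  by_cases h' : ∑ i, x i ≤ a
  swap
  · simp [h, h']
  have hdf : ((k+m).factorial : ℝ) = m.factorial * (k+m).descFactorial k := by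
    rw [← Nat.factorial_mul_descFactorial hkn]; simp
  have h3 : (1 - (∑ i, x i) / a) = (a - ∑ i, x i) / a := by field_simp
  simp only [h, h', implies_true, if_true, sub_nonneg, and_self, smul_eq_mul, h3, div_pow,
    Nat.add_sub_cancel_left]
  rw [hdf]
  have := Nat.factorial_pos m
  field_simp
  ring

lemma prod_dens (k : ℕ) (lam : ℝ) (x : Fin k → ℝ) :
    (∏ i, if 0 ≤ x i then lam⁻¹ * Real.exp (-x i / lam) else 0)
    = if (∀ i, 0 ≤ x i) then (lam ^ k)⁻¹ * Real.exp (-(∑ i, x i) / lam) else 0 := by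
  split_ifs with h
  · simp only [h, if_true]
    rw [Finset.prod_mul_distrib, ← Real.exp_sum, ← Finset.sum_div, Finset.sum_neg_distrib]
    simp
  · push Not at h
    obtain ⟨i, hi⟩ := h
    exact Finset.prod_eq_zero (Finset.mem_univ i) (by simp [hi])

theorem stmt0 (lam : ℝ) (hlam : 0 < lam) (a : ℕ → ℝ) (ha : ∀ n, 0 < a n)
    (hlim : Tendsto (fun n => a n / n) atTop (𝓝 lam)) (k : ℕ) (hk : 0 < k) :
    ∀ f : BoundedContinuousFunction (Fin k → ℝ) ℝ,
      Tendsto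
        (fun n => ∫ y, f (fun i : Fin k => if h : (i : ℕ) < n then y ⟨i, h⟩ else 0)
          ∂ simplexMeasure n (a n))
        atTop
        (𝓝 (∫ x, f x ∂ Measure.pi fun _ : Fin k => expMeasure lam)) := by
  intro f
  have hinv : Tendsto (fun n : ℕ => (n : ℝ) / a n) atTop (𝓝 lam⁻¹) := by
    refine (hlim.inv₀ hlam.ne').congr fun n => ?_
    rw [inv_div]
  have hzero : Tendsto (fun n : ℕ => 1 / a n) atTop (𝓝 0) := by
    have := hinv.mul (tendsto_one_div_atTop_nhds_zero_nat (𝕜 := ℝ))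
    rw [mul_zero] at this
    refine this.congr' ?_
    filter_upwards [eventually_gt_atTop 0] with n hn
    have : (n : ℝ) ≠ 0 := by positivity
    have := (ha n).ne'
    field_simp
  have hC : Tendsto (fun n : ℕ => (n.descFactorial k : ℝ) / a n ^ k) atTop (𝓝 (lam ^ k)⁻¹) := by
    have h1 : Tendsto (fun n : ℕ => (n.descFactorial k : ℝ) / (n : ℝ) ^ k) atTop (𝓝 1) := by
      have := isEquivalent_descFactorial k
      refine (Asymptotics.isEquivalent_iff_tendsto_one ?_).1 this
      filter_upwards [eventually_gt_atTop 0] with n hn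
      positivity
    have h2 := h1.mul (hinv.pow k)
    rw [one_mul, inv_pow] at h2
    refine h2.congr' ?_
    filter_upwards [eventually_gt_atTop 0] with n hn
    have : (n : ℝ) ≠ 0 := by positivity
    have := (ha n).ne'
    rw [div_pow]; field_simp
  have hsub : Tendsto (fun n : ℕ => ((n - k : ℕ) : ℝ) / a n) atTop (𝓝 lam⁻¹) := by
    have h := hinv.sub (hzero.const_mul (k : ℝ))
    rw [mul_zero, sub_zero] at h
    refine h.congr' ?_
    filter_upwards [eventually_ge_atTop k] with n hn
    rw [Nat.cast_sub hn]; ring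
  have hpow : ∀ s : ℝ, Tendsto (fun n : ℕ => (1 - s / a n) ^ (n - k)) atTop
      (𝓝 (Real.exp (-s / lam))) := by
    intro s
    have h1 : Tendsto (fun n : ℕ => (n : ℝ) * (-s / a n)) atTop (𝓝 (-s / lam)) := by
      have := hinv.const_mul (-s)
      rw [← div_eq_mul_inv] at this
      refine this.congr fun n => by ring
    have h2 := Real.tendsto_one_add_pow_exp_of_tendsto h1
    have h3 : Tendsto (fun n : ℕ => (1 + -s / a n)) atTop (𝓝 1) := by
      have := (hzero.const_mul (-s)).const_add 1
      rw [mul_zero, add_zero] at this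
      refine this.congr fun n => by ring
    have h4 := h2.div (h3.pow k) (by simp)
    rw [one_pow, div_one] at h4
    refine h4.congr' ?_
    filter_upwards [eventually_ge_atTop k, h3.eventually_ne one_ne_zero] with n hn hne
    have : (1 - s / a n) = 1 + -s / a n := by ring
    rw [this, pow_sub₀ _ hne hn]; rfl
  have h2l : 0 < 2 * lam := by positivity
  obtain ⟨hdi, -⟩ := pi_exp k (2 * lam) h2l f
  rw [(pi_exp k lam hlam f).2]
  simp_rw [prod_dens]
  have hev : (fun n => ∫ x, (if (∀ i, 0 ≤ x i) ∧ ∑ i, x i ≤ a n then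
        (n.descFactorial k : ℝ) / a n ^ k * (1 - (∑ i, x i) / a n) ^ (n - k) else 0) * f x)
      =ᶠ[atTop] (fun n => ∫ y, f (fun i : Fin k => if h : (i : ℕ) < n then y ⟨i, h⟩ else 0)
          ∂ simplexMeasure n (a n)) := by
    filter_upwards [eventually_ge_atTop k] with n hn
    exact (marg k n hn (a n) (ha n) f).symm
  refine Tendsto.congr' hev ?_
  have hbdi := (Integrable.fintype_prod (μ := fun _ : Fin k => (volume : Measure ℝ))
    (f := fun _ : Fin k => fun t : ℝ =>
      if 0 ≤ t then (2 * lam)⁻¹ * Real.exp (-t / (2 * lam)) else 0) fun i => hdi)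
  simp_rw [prod_dens] at hbdi
  refine tendsto_integral_filter_of_dominated_convergence
    (fun x => (((lam ^ k)⁻¹ + 1) * (2 * lam) ^ k * ‖f‖) *
      (if (∀ i, 0 ≤ x i) then ((2 * lam) ^ k)⁻¹ * Real.exp (-(∑ i, x i) / (2 * lam)) else 0))
    ?_ ?_ (hbdi.const_mul _) ?_
  · refine Eventually.of_forall fun n => ?_
    refine AEStronglyMeasurable.mul ?_ f.continuous.aestronglyMeasurable
    exact (Measurable.ite (SS_meas k (a n)) (by fun_prop) (by fun_prop)).aestronglyMeasurable
  · have hlt : (2 * lam)⁻¹ < lam⁻¹ := by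
      rw [inv_lt_inv₀ h2l hlam]; linarith
    filter_upwards [hC.eventually_le_const (lt_add_one _), hsub.eventually_const_le hlt]
      with n hn1 hn2
    refine Eventually.of_forall fun x => ?_
    by_cases hx : (∀ i, 0 ≤ x i)
    swap
    · simp [hx]
    by_cases hs : ∑ i, x i ≤ a n
    swap
    · simp only [hx, hs, implies_true, and_false, if_false, if_true, zero_mul, norm_zero]
      positivity
    simp only [hx, hs, implies_true, and_self, if_true]
    have hs0 : 0 ≤ ∑ i, x i := Finset.sum_nonneg fun i _ => hx i
    set s := ∑ i, x i
    have han := ha n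
    have hb0 : 0 ≤ 1 - s / a n := by
      rw [sub_nonneg, div_le_one han]; exact hs
    have hb1 : (1 - s / a n) ^ (n - k) ≤ Real.exp (-s / (2 * lam)) := by
      calc (1 - s / a n) ^ (n - k) ≤ (Real.exp (-(s / a n))) ^ (n - k) :=
            pow_le_pow_left₀ hb0 (Real.one_sub_le_exp_neg _) _
        _ = Real.exp (-(s * (((n - k : ℕ) : ℝ) / a n))) := by
            rw [← Real.exp_nat_mul]; congr 1; ring
        _ ≤ _ := by
            rw [Real.exp_le_exp, neg_div, neg_le_neg_iff, div_eq_mul_inv]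
            exact mul_le_mul_of_nonneg_left hn2 hs0
    have hfx := f.norm_coe_le_norm x
    rw [norm_mul, norm_mul, Real.norm_of_nonneg (by positivity : 0 ≤ (n.descFactorial k : ℝ) / a n ^ k),
      Real.norm_of_nonneg (pow_nonneg hb0 _)]
    calc _ ≤ ((lam ^ k)⁻¹ + 1) * Real.exp (-s / (2 * lam)) * ‖f‖ := by gcongr
      _ = _ := by field_simp
  · refine Eventually.of_forall fun x => ?_
    refine Tendsto.mul_const _ ?_
    by_cases hx : (∀ i, 0 ≤ x i)
    swap
    · simp [hx]
    simp only [hx, implies_true, true_and, if_true]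
    refine (hC.mul (hpow (∑ i, x i))).congr' ?_
    have hs0 : 0 ≤ ∑ i, x i := Finset.sum_nonneg fun i _ => hx i
    have : Tendsto (fun n => (∑ i, x i) * (1 / a n)) atTop (𝓝 0) := by
      simpa using hzero.const_mul (∑ i, x i)
    filter_upwards [this.eventually_lt_const zero_lt_one] with n hn
    rw [if_pos]
    rw [mul_one_div, div_lt_one (ha n)] at hn
    exact hn.le
end

section
/- Let λ > 0 and let (a_n) be a sequence of positive reals with a_n = λn + o(n). Let μ_{a_n} be the normalized Lebesgue measure on the simplex Δ_n(a_n) = {x ∈ ℝ^n : 0 ≤ x_0 ≤ x_1 ≤ … ≤ x_{n−1} ≤ a_n}. For every fixed positive integer k, the joint distribution of (x_0, x_1, …, x_{k−1}) under μ_{a_n} converges weakly, as n → ∞, to the distribution of the partial sums (Y_1, Y_1+Y_2, …, Y_1+…+Y_k) of k independent random variables each having the exponential distribution with mean λ; equivalently, the distribution of the increments (x_0, x_1−x_0, …, x_{k−1}−x_{k−2}) converges weakly to the k-fold product of the exponential distribution with mean λ. -/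
open MeasureTheory Filter Topology

/-- The normalized Lebesgue measure on the simplex
`Δ_n(a) = {x ∈ ℝ^n : 0 ≤ x_0 ≤ x_1 ≤ … ≤ x_{n-1} ≤ a}`. -/
noncomputable def chainSimplexMeasure (n : ℕ) (a : ℝ) : Measure (Fin n → ℝ) :=
  (volume {x : Fin n → ℝ | (∀ i, 0 ≤ x i) ∧ Monotone x ∧ ∀ i, x i ≤ a})⁻¹ •
    volume.restrict {x : Fin n → ℝ | (∀ i, 0 ≤ x i) ∧ Monotone x ∧ ∀ i, x i ≤ a}

def chS (n : ℕ) (c a : ℝ) : Set (Fin n → ℝ) :=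
  {x : Fin n → ℝ | (∀ i, c ≤ x i) ∧ Monotone x ∧ ∀ i, x i ≤ a}

lemma chS_meas (n : ℕ) (c a : ℝ) : MeasurableSet (chS n c a) := by
  apply IsClosed.measurableSet
  have h1 : IsClosed (⋂ i, {x : Fin n → ℝ | c ≤ x i}) :=
    isClosed_iInter fun i => isClosed_le continuous_const (continuous_apply i)
  have h2 : IsClosed (⋂ i, {x : Fin n → ℝ | x i ≤ a}) :=
    isClosed_iInter fun i => isClosed_le (continuous_apply i) continuous_const
  have h3 : IsClosed {x : Fin n → ℝ | Monotone x} := isClosed_monotone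
  convert h1.inter (h3.inter h2)
  ext x
  simp [chS]

lemma append_mp (k m : ℕ) : MeasurePreserving
    (fun p : (Fin k → ℝ) × (Fin m → ℝ) => (Fin.append p.1 p.2 : Fin (k + m) → ℝ)) := by
  have hm : Measurable
      (fun p : (Fin k → ℝ) × (Fin m → ℝ) => (Fin.append p.1 p.2 : Fin (k + m) → ℝ)) := by
    refine measurable_pi_lambda _ fun i => ?_
    refine Fin.addCases (fun i => ?_) (fun i => ?_) i
    · simp only [Fin.append_left]; fun_prop
    · simp only [Fin.append_right]; fun_prop
  refine ⟨hm, ?_⟩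
  refine (Measure.pi_eq fun s hs => ?_).symm
  rw [Measure.map_apply hm (MeasurableSet.univ_pi hs)]
  have : (fun p : (Fin k → ℝ) × (Fin m → ℝ) => (Fin.append p.1 p.2 : Fin (k + m) → ℝ)) ⁻¹'
      (Set.univ.pi s) = (Set.univ.pi fun i => s (Fin.castAdd m i)) ×ˢ
        (Set.univ.pi fun i => s (Fin.natAdd k i)) := by
    ext p
    simp only [Set.mem_preimage, Set.mem_pi, Set.mem_univ, true_imp_iff, Set.mem_prod]
    constructor
    · intro h
      exact ⟨fun i => by simpa using h (Fin.castAdd m i), fun i => by simpa using h (Fin.natAdd k i)⟩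
    · rintro ⟨h1, h2⟩ i
      refine Fin.addCases (fun i => ?_) (fun i => ?_) i
      · simpa using h1 i
      · simpa using h2 i
  rw [this, Measure.volume_eq_prod, Measure.prod_prod, volume_pi_pi, volume_pi_pi,
    Fin.prod_univ_add]

lemma cons_mp (m : ℕ) : MeasurePreserving
    (fun p : ℝ × (Fin m → ℝ) => (Fin.cons p.1 p.2 : Fin (m + 1) → ℝ)) := by
  have hm : Measurable
      (fun p : ℝ × (Fin m → ℝ) => (Fin.cons p.1 p.2 : Fin (m + 1) → ℝ)) := by
    refine measurable_pi_lambda _ fun i => ?_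
    refine Fin.cases ?_ (fun i => ?_) i
    · simp only [Fin.cons_zero]; fun_prop
    · simp only [Fin.cons_succ]; fun_prop
  refine ⟨hm, ?_⟩
  refine (Measure.pi_eq fun s hs => ?_).symm
  rw [Measure.map_apply hm (MeasurableSet.univ_pi hs)]
  have : (fun p : ℝ × (Fin m → ℝ) => (Fin.cons p.1 p.2 : Fin (m + 1) → ℝ)) ⁻¹'
      (Set.univ.pi s) = (s 0) ×ˢ (Set.univ.pi fun i => s (Fin.succ i)) := by
    ext p
    simp only [Set.mem_preimage, Set.mem_pi, Set.mem_univ, true_imp_iff, Set.mem_prod]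
    rw [Fin.forall_fin_succ]
    simp
  rw [this, Measure.volume_eq_prod, Measure.prod_prod, volume_pi_pi, Fin.prod_univ_succ]

lemma cons_mem (n : ℕ) (c a t : ℝ) (v : Fin n → ℝ) :
    (Fin.cons t v : Fin (n + 1) → ℝ) ∈ chS (n + 1) c a ↔ t ∈ Set.Icc c a ∧ v ∈ chS n t a := by
  unfold chS
  simp only [Set.mem_ofPred_eq, Set.mem_Icc]
  constructor
  · rintro ⟨h1, h2, h3⟩
    refine ⟨⟨by simpa using h1 0, by simpa using h3 0⟩, fun i => ?_, fun i i' h => ?_, fun i => ?_⟩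
    · simpa using h2 (Fin.zero_le i.succ)
    · simpa using h2 (Fin.succ_le_succ_iff.2 h)
    · simpa using h3 i.succ
  · rintro ⟨⟨h1, h2⟩, h3, h4, h5⟩
    refine ⟨fun i => ?_, fun i i' h => ?_, fun i => ?_⟩
    · refine Fin.cases (by simpa using h1) (fun i => by simpa using h1.trans (h3 i)) i
    · induction i using Fin.cases with
      | zero => induction i' using Fin.cases with
        | zero => simp
        | succ i' => simpa using h3 i'
      | succ i => induction i' using Fin.cases with
        | zero => simp at h
        | succ i' => simpa using h4 (Fin.succ_le_succ_iff.1 h)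
    · refine Fin.cases (by simpa using h2) (fun i => by simpa using h5 i) i

lemma append_mem (j m : ℕ) (c a : ℝ) (u : Fin (j + 1) → ℝ) (v : Fin m → ℝ) :
    (Fin.append u v : Fin (j + 1 + m) → ℝ) ∈ chS (j + 1 + m) c a ↔
      u ∈ chS (j + 1) c a ∧ v ∈ chS m (u (Fin.last j)) a := by
  unfold chS
  simp only [Set.mem_ofPred_eq]
  constructor
  · rintro ⟨h1, h2, h3⟩
    refine ⟨⟨fun i => ?_, fun i i' h => ?_, fun i => ?_⟩, fun i => ?_, fun i i' h => ?_, fun i => ?_⟩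
    · simpa using h1 (Fin.castAdd m i)
    · simpa using h2 (show Fin.castAdd m i ≤ Fin.castAdd m i' from h)
    · simpa using h3 (Fin.castAdd m i)
    · simpa only [Fin.append_left, Fin.append_right] using
        h2 (show Fin.castAdd m (Fin.last j) ≤ Fin.natAdd (j + 1) i by
          rw [Fin.le_def]; simp; omega)
    · simpa using h2 (show Fin.natAdd (j + 1) i ≤ Fin.natAdd (j + 1) i' by
        rw [Fin.le_def] at *; simp; omega)
    · simpa using h3 (Fin.natAdd (j + 1) i)
  · rintro ⟨⟨h1, h2, h3⟩, h4, h5, h6⟩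
    refine ⟨fun i => ?_, fun i i' h => ?_, fun i => ?_⟩
    · refine Fin.addCases (fun i => by simpa using h1 i)
        (fun i => by simpa using (h1 (Fin.last j)).trans (h4 i)) i
    · induction i using Fin.addCases with
      | left i => induction i' using Fin.addCases with
        | left i' => simpa using h2 (show i ≤ i' from h)
        | right i' =>
          simpa only [Fin.append_left, Fin.append_right] using (h2 (Fin.le_last i)).trans (h4 i')
      | right i => induction i' using Fin.addCases with
        | left i' => rw [Fin.le_def] at h; simp at h; omega
        | right i' => simpa using h5 (show i ≤ i' by rw [Fin.le_def] at *; simp at h; omega)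
    · refine Fin.addCases (fun i => by simpa using h3 i) (fun i => by simpa using h6 i) i

lemma chS_vol (n : ℕ) (a : ℝ) : ∀ c : ℝ, c ≤ a →
    volume (chS n c a) = ENNReal.ofReal ((a - c) ^ n / n.factorial) := by
  induction n with
  | zero =>
    intro c hc
    have : chS 0 c a = Set.univ.pi (fun _ => Set.univ) := by
      ext x; simp [chS]; exact Subsingleton.monotone x
    rw [this, volume_pi_pi]; simp
  | succ n ih =>
    intro c hc
    rw [← (cons_mp n).measure_preimage (chS_meas _ _ _).nullMeasurableSet, Measure.volume_eq_prod,
      Measure.prod_apply ((cons_mp n).measurable (chS_meas _ _ _))]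
    have : ∀ t : ℝ, volume (Prod.mk t ⁻¹' ((fun p : ℝ × (Fin n → ℝ) =>
        (Fin.cons p.1 p.2 : Fin (n + 1) → ℝ)) ⁻¹' chS (n + 1) c a)) =
        (Set.Icc c a).indicator (fun t => ENNReal.ofReal ((a - t) ^ n / n.factorial)) t := by
      intro t
      by_cases ht : t ∈ Set.Icc c a
      · rw [Set.indicator_of_mem ht, ← ih t ht.2]
        congr 1
        ext v
        simp only [Set.mem_preimage, cons_mem, ht, true_and]
      · rw [Set.indicator_of_notMem ht]
        convert measure_empty (μ := (volume : Measure (Fin n → ℝ)))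
        ext v
        simp only [Set.mem_preimage, cons_mem, ht, false_and, Set.mem_empty_iff_false]
    simp_rw [this]
    rw [lintegral_indicator measurableSet_Icc, ← ofReal_integral_eq_lintegral_ofReal]
    · congr 1
      rw [integral_Icc_eq_integral_Ioc, ← intervalIntegral.integral_of_le hc,
        intervalIntegral.integral_div,
        intervalIntegral.integral_comp_sub_left (fun x => x ^ n), integral_pow]
      rw [Nat.factorial_succ]
      have := Nat.factorial_ne_zero n
      push_cast
      field_simp
      simp
    · exact (Continuous.continuousOn (by fun_prop)).integrableOn_Icc
    · refine (ae_restrict_iff' measurableSet_Icc).2 (Eventually.of_forall fun t ht => ?_)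
      have := sub_nonneg.2 ht.2
      simp only [Pi.zero_apply]
      positivity

/-- unnormalised density -/
noncomputable def dens (j m : ℕ) (a : ℝ) (u : Fin (j + 1) → ℝ) : ℝ :=
  (chS (j + 1) 0 a).indicator (fun u => (a - u (Fin.last j)) ^ m / m.factorial) u

lemma dens_meas (j m : ℕ) (a : ℝ) : Measurable (dens j m a) := by
  unfold dens
  exact Measurable.indicator (by fun_prop) (chS_meas _ _ _)

lemma dens_nonneg (j m : ℕ) (a : ℝ) (u) : 0 ≤ dens j m a u := by
  unfold dens
  refine Set.indicator_nonneg (fun u hu => ?_) u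
  have := sub_nonneg.2 (hu.2.2 (Fin.last j))
  positivity

lemma map_proj (j m : ℕ) (a : ℝ) :
    (volume.restrict (chS (j + 1 + m) 0 a)).map (fun x i => x (Fin.castAdd m i)) =
      volume.withDensity (fun u => ENNReal.ofReal (dens j m a u)) := by
  have hp : Measurable (fun (x : Fin (j + 1 + m) → ℝ) (i : Fin (j + 1)) => x (Fin.castAdd m i)) := by
    fun_prop
  ext B hB
  rw [Measure.map_apply hp hB, Measure.restrict_apply (hp hB), withDensity_apply _ hB,
    ← (append_mp (j + 1) m).measure_preimage ((hp hB).inter (chS_meas _ _ _)).nullMeasurableSet,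
    Measure.volume_eq_prod,
    Measure.prod_apply ((append_mp _ m).measurable ((hp hB).inter (chS_meas _ _ _))),
    ← lintegral_indicator hB]
  congr 1
  ext u
  by_cases hu : u ∈ B
  · rw [Set.indicator_of_mem hu]
    unfold dens
    by_cases hu' : u ∈ chS (j + 1) 0 a
    · rw [Set.indicator_of_mem hu', ← chS_vol m a _ (hu'.2.2 _)]
      congr 1
      ext v
      simp only [Set.mem_preimage, Set.mem_inter_iff, append_mem, Fin.append_left, hu, hu', true_and]
    · rw [Set.indicator_of_notMem hu', ENNReal.ofReal_zero]
      convert measure_empty (μ := (volume : Measure (Fin m → ℝ)))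
      ext v
      simp only [Set.mem_preimage, Set.mem_inter_iff, append_mem, hu', false_and, and_false,
        Set.mem_empty_iff_false]
  · rw [Set.indicator_of_notMem hu]
    convert measure_empty (μ := (volume : Measure (Fin m → ℝ)))
    ext v
    simp only [Set.mem_preimage, Set.mem_inter_iff, Fin.append_left, hu, false_and,
      Set.mem_empty_iff_false]

lemma key (j m : ℕ) (a : ℝ) (ha : 0 < a) (f : BoundedContinuousFunction (Fin (j + 1) → ℝ) ℝ)
    (n : ℕ) (hn : n = j + 1 + m) :
    ∫ x, f (fun i : Fin (j + 1) => if h : (i : ℕ) < n then x ⟨i, h⟩ else 0)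
          ∂ chainSimplexMeasure n a =
    ∫ u, (n.factorial / a ^ n) * dens j m a u * f u := by
  subst hn
  have h1 : ∀ x : Fin (j + 1 + m) → ℝ, (fun i : Fin (j + 1) =>
      if h : (i : ℕ) < j + 1 + m then x ⟨i, h⟩ else 0) = fun i => x (Fin.castAdd m i) := by
    intro x; ext i
    rw [dif_pos (by omega)]; rfl
  simp_rw [h1]
  have hp : Measurable (fun (x : Fin (j + 1 + m) → ℝ) (i : Fin (j + 1)) => x (Fin.castAdd m i)) := by
    fun_prop
  have h2 : chainSimplexMeasure (j + 1 + m) a =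
    (volume (chS (j + 1 + m) 0 a))⁻¹ • volume.restrict (chS (j + 1 + m) 0 a) := rfl
  rw [h2, integral_smul_measure, chS_vol _ _ _ ha.le,
    ← integral_map (φ := fun (x : Fin (j + 1 + m) → ℝ) (i : Fin (j + 1)) => x (Fin.castAdd m i))
      (f := f) hp.aemeasurable f.continuous.aestronglyMeasurable, map_proj,
    integral_withDensity_eq_integral_toReal_smul (dens_meas _ _ _).ennreal_ofReal
      (Eventually.of_forall fun _ => ENNReal.ofReal_lt_top), smul_eq_mul, ← integral_const_mul]
  congr 1
  ext u
  rw [ENNReal.toReal_inv, ENNReal.toReal_ofReal (by rw [sub_zero]; positivity), ENNReal.toReal_ofReal (dens_nonneg _ _ _ _)]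
  simp [mul_assoc]

noncomputable def pd (lam t : ℝ) : ℝ := if 0 ≤ t then lam⁻¹ * Real.exp (-t / lam) else 0

lemma pd_nonneg (lam : ℝ) (hlam : 0 < lam) (t : ℝ) : 0 ≤ pd lam t := by
  unfold pd; split_ifs <;> positivity

lemma int_exp (b : ℝ) (hb : 0 < b) :
    Integrable (fun t : ℝ => if 0 ≤ t then Real.exp (-b * t) else 0) := by
  have h := exp_neg_integrableOn_Ioi 0 hb
  rw [← integrableOn_Ici_iff_integrableOn_Ioi, ← integrable_indicator_iff measurableSet_Ici] at h
  have e : (fun t : ℝ => if 0 ≤ t then Real.exp (-b * t) else 0) =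
      (Set.Ici 0).indicator fun x => Real.exp (-b * x) := by
    ext t
    simp [Set.indicator_apply]
  rw [e]
  exact h

lemma pd_int (lam : ℝ) (hlam : 0 < lam) : Integrable (pd lam) := by
  convert (int_exp lam⁻¹ (inv_pos.2 hlam)).const_mul lam⁻¹ using 2 with t
  unfold pd
  split_ifs
  · congr 2; field_simp
  · simp

lemma pi_exp_s1 (k : ℕ) (lam : ℝ) (hlam : 0 < lam) :
    (Measure.pi fun _ : Fin k => expMeasure lam) =
      volume.withDensity (fun y => ENNReal.ofReal (∏ i, pd lam (y i))) := by
  have he : expMeasure lam = volume.withDensity (fun t => ENNReal.ofReal (pd lam t)) := rfl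
  have : SigmaFinite (expMeasure lam) := by
    rw [he]; infer_instance
  refine (Measure.pi_eq fun s hs => ?_)
  have hint : Integrable (fun y : Fin k → ℝ => ∏ i, pd lam (y i)) :=
    Integrable.fintype_prod (fun _ => pd_int lam hlam)
  rw [withDensity_apply _ (MeasurableSet.univ_pi hs),
    ← ofReal_integral_eq_lintegral_ofReal hint.restrict
      (Eventually.of_forall fun y => Finset.prod_nonneg fun i _ => pd_nonneg lam hlam _),
    volume_pi, Measure.restrict_pi_pi, integral_fintype_prod_eq_prod (fun _ => pd lam),
    ENNReal.ofReal_prod_of_nonneg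
      (fun i _ => integral_nonneg (fun t => pd_nonneg lam hlam t))]
  refine Finset.prod_congr rfl fun i _ => ?_
  rw [he, withDensity_apply _ (hs i), ofReal_integral_eq_lintegral_ofReal (pd_int lam hlam).restrict
    (Eventually.of_forall fun t => pd_nonneg lam hlam t)]

def cone (k : ℕ) : Set (Fin k → ℝ) := {u | (∀ i, 0 ≤ u i) ∧ Monotone u}

lemma cone_meas (k : ℕ) : MeasurableSet (cone k) := by
  apply IsClosed.measurableSet
  have h1 : IsClosed (⋂ i, {x : Fin k → ℝ | 0 ≤ x i}) :=
    isClosed_iInter fun i => isClosed_le continuous_const (continuous_apply i)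
  have h3 : IsClosed {x : Fin k → ℝ | Monotone x} := isClosed_monotone
  convert h1.inter h3
  ext x
  simp [cone]

noncomputable def limD (lam : ℝ) (j : ℕ) (u : Fin (j + 1) → ℝ) : ℝ :=
  (cone (j + 1)).indicator (fun u => lam⁻¹ ^ (j + 1) * Real.exp (-u (Fin.last j) / lam)) u

lemma limD_meas (lam : ℝ) (j : ℕ) : Measurable (limD lam j) := by
  unfold limD
  exact Measurable.indicator (by fun_prop) (cone_meas _)

lemma psum_mp (k : ℕ) : MeasurePreserving
    (fun (y : Fin k → ℝ) (i : Fin k) => ∑ j ∈ Finset.Iic i, y j) := by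
  let M : Matrix (Fin k) (Fin k) ℝ := Matrix.of fun i j => if j ≤ i then 1 else 0
  have hd : M.det = 1 := by
    rw [Matrix.det_of_lowerTriangular M]
    · simp [M]
    · intro i j hij
      have : i < j := by simpa using hij
      simp [M, this]
  have hM : ⇑(Matrix.toLin' M) = (fun (y : Fin k → ℝ) (i : Fin k) => ∑ j ∈ Finset.Iic i, y j) := by
    ext y i
    rw [Matrix.toLin'_apply, Matrix.mulVec, dotProduct]
    simp only [M, Matrix.of_apply, ite_mul, one_mul, zero_mul]
    rw [← Finset.sum_filter]
    congr 1
    ext x; simp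
  have := Real.map_matrix_volume_pi_eq_smul_volume_pi (M := M) (by rw [hd]; simp)
  rw [hd, hM] at this
  refine ⟨by fun_prop, ?_⟩
  rw [this]; simp

lemma psum_cone (k : ℕ) (y : Fin k → ℝ) :
    (fun i : Fin k => ∑ j ∈ Finset.Iic i, y j) ∈ cone k ↔ ∀ i, 0 ≤ y i := by
  constructor
  · rintro ⟨h1, h2⟩ i
    by_cases hi : (i : ℕ) = 0
    · have := h1 i
      have h : Finset.Iic i = {i} := by
        ext x; simp only [Finset.mem_Iic, Finset.mem_singleton, Fin.le_def, Fin.ext_iff]; omega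
      simpa [h] using this
    · let i' : Fin k := ⟨i - 1, by omega⟩
      have := h2 (show i' ≤ i by rw [Fin.le_def]; simp [i'])
      have h : Finset.Iic i = insert i (Finset.Iic i') := by
        ext x
        simp only [Finset.mem_Iic, Finset.mem_insert, Fin.le_def, Fin.ext_iff, i']; omega
      simp only [h] at this
      rw [Finset.sum_insert (by simp only [Finset.mem_Iic, Fin.le_def, i']; omega)] at this
      linarith
  · intro h
    refine ⟨fun i => Finset.sum_nonneg fun j _ => h j, fun i i' hi => ?_⟩
    exact Finset.sum_le_sum_of_subset_of_nonneg (Finset.Iic_subset_Iic.2 hi) fun j _ _ => h j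

lemma limD_psum (lam : ℝ) (j : ℕ) (y : Fin (j + 1) → ℝ) :
    limD lam j (fun i => ∑ j ∈ Finset.Iic i, y j) = ∏ i, pd lam (y i) := by
  unfold limD
  by_cases h : ∀ i, 0 ≤ y i
  · rw [Set.indicator_of_mem ((psum_cone _ y).2 h)]
    simp only [pd, h, if_true]
    rw [Finset.prod_mul_distrib, ← Real.exp_sum]
    have : Finset.Iic (Fin.last j) = Finset.univ := by
      ext x; simp [Fin.le_last]
    simp [this, ← Finset.sum_div]
  · rw [Set.indicator_of_notMem (fun h' => h ((psum_cone _ y).1 h'))]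
    push Not at h
    obtain ⟨i, hi⟩ := h
    exact (Finset.prod_eq_zero (Finset.mem_univ i) (by simp [pd, hi])).symm

lemma limD_int_eq (lam : ℝ) (hlam : 0 < lam) (j : ℕ)
    (f : BoundedContinuousFunction (Fin (j + 1) → ℝ) ℝ) :
    ∫ y, f (fun i => ∑ j ∈ Finset.Iic i, y j) ∂ (Measure.pi fun _ : Fin (j + 1) => expMeasure lam) =
      ∫ u, limD lam j u * f u := by
  have hm : Measurable (fun y : Fin (j + 1) → ℝ => ∏ i, pd lam (y i)) := by
    simp_rw [← limD_psum]
    exact (limD_meas lam j).comp (psum_mp _).measurable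
  rw [pi_exp_s1 _ _ hlam, integral_withDensity_eq_integral_toReal_smul hm.ennreal_ofReal
    (Eventually.of_forall fun _ => ENNReal.ofReal_lt_top)]
  conv_rhs => rw [← (psum_mp (j + 1)).map_eq]
  rw [integral_map (f := fun u => limD lam j u * f u) (psum_mp _).measurable.aemeasurable
    ((limD_meas lam j).mul f.continuous.measurable).aestronglyMeasurable]
  congr 1
  ext y
  rw [limD_psum, ENNReal.toReal_ofReal (Finset.prod_nonneg fun i _ => pd_nonneg lam hlam _),
    smul_eq_mul]

lemma coef (j m : ℕ) (a : ℝ) (ha : 0 < a) (u : Fin (j + 1) → ℝ) (hu : u ∈ chS (j + 1) 0 a) :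
    ((m + (j + 1)).factorial / a ^ (m + (j + 1))) * dens j m a u =
      ((m + (j + 1)).descFactorial (j + 1) / a ^ (j + 1)) * (1 + -u (Fin.last j) / a) ^ m := by
  unfold dens
  rw [Set.indicator_of_mem hu]
  have h := Nat.factorial_mul_descFactorial (show j + 1 ≤ m + (j + 1) by omega)
  rw [Nat.add_sub_cancel] at h
  rw [← h]
  have h1 : (1 + -u (Fin.last j) / a) = (a - u (Fin.last j)) / a := by field_simp; ring
  have h2 : (m.factorial : ℝ) ≠ 0 := by exact_mod_cast Nat.factorial_ne_zero m
  rw [h1, div_pow, pow_add]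
  push_cast
  field_simp

theorem stmt1 (lam : ℝ) (hlam : 0 < lam) (a : ℕ → ℝ) (ha : ∀ n, 0 < a n)
    (hlim : (fun n => a n - lam * n) =o[atTop] (fun n => (n : ℝ))) (k : ℕ) (hk : 0 < k) :
    ∀ f : BoundedContinuousFunction (Fin k → ℝ) ℝ,
      Tendsto
        (fun n => ∫ x, f (fun i : Fin k => if h : (i : ℕ) < n then x ⟨i, h⟩ else 0)
          ∂ chainSimplexMeasure n (a n))
        atTop
        (𝓝 (∫ y, f (fun i : Fin k => ∑ j ∈ Finset.Iic i, y j)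
          ∂ Measure.pi fun _ : Fin k => expMeasure lam)) := by
  intro f
  obtain ⟨j, rfl⟩ : ∃ j, k = j + 1 := ⟨k - 1, by omega⟩
  rw [limD_int_eq lam hlam, ← tendsto_add_atTop_iff_nat (j + 1)]
  simp_rw [fun m => key j m (a (m + (j + 1))) (ha _) f (m + (j + 1)) (by omega)]
  -- asymptotics
  have hnn : ∀ᶠ n : ℕ in atTop, (n : ℝ) ≠ 0 := by
    filter_upwards [eventually_gt_atTop 0] with n hn
    exact_mod_cast hn.ne'
  have e1 : Tendsto (fun n : ℕ => a n / n) atTop (𝓝 lam) := by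
    have := hlim.tendsto_div_nhds_zero.add_const lam
    rw [zero_add] at this
    refine this.congr' ?_
    filter_upwards [hnn] with n hn
    field_simp; ring
  have e2 : Tendsto (fun n : ℕ => n / a n) atTop (𝓝 lam⁻¹) := by
    refine (e1.inv₀ hlam.ne').congr fun n => ?_
    rw [inv_div]
  have e3 : Tendsto a atTop atTop := by
    refine (Tendsto.atTop_mul_pos hlam tendsto_natCast_atTop_atTop e1).congr' ?_
    filter_upwards [hnn] with n hn
    field_simp
  have e4 : Tendsto (fun n : ℕ => (n.descFactorial (j + 1) : ℝ) / a n ^ (j + 1)) atTop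
      (𝓝 (lam⁻¹ ^ (j + 1))) := by
    have h := isEquivalent_descFactorial (j + 1)
    rw [Asymptotics.isEquivalent_iff_tendsto_one] at h
    · have h' := h.mul (e2.pow (j + 1))
      rw [one_mul] at h'
      refine h'.congr' ?_
      filter_upwards [hnn] with n hn
      have := ha n
      simp only [Pi.div_apply, div_pow]
      field_simp
    · filter_upwards [hnn] with n hn
      positivity
  have e3' : Tendsto (fun m => a (m + (j + 1))) atTop atTop :=
    (tendsto_add_atTop_iff_nat (j + 1)).2 e3
  have e4' := (tendsto_add_atTop_iff_nat (j + 1)).2 e4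
  have e5 : Tendsto (fun m : ℕ => (m : ℝ) / a (m + (j + 1))) atTop (𝓝 lam⁻¹) := by
    have h := ((tendsto_add_atTop_iff_nat (j + 1)).2 e2).sub
      (e3'.const_div_atTop ((j : ℝ) + 1))
    rw [sub_zero] at h
    refine h.congr fun m => ?_
    push_cast
    ring
  set b : ℝ := (2 * lam * (j + 1))⁻¹ with hb
  have hb0 : 0 < b := by positivity
  have hI : Integrable (fun u : Fin (j + 1) → ℝ =>
      (lam⁻¹ ^ (j + 1) + 1) * (∏ i, (if 0 ≤ u i then Real.exp (-b * u i) else 0)) * ‖f‖) :=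
    ((Integrable.fintype_prod (fun _ => int_exp b hb0)).const_mul _).mul_const _
  refine tendsto_integral_filter_of_dominated_convergence _ ?_ ?_ hI ?_
  · refine Eventually.of_forall fun m => ?_
    exact (((dens_meas _ _ _).const_mul _).mul f.continuous.measurable).aestronglyMeasurable
  · have l1 : ∀ᶠ m : ℕ in atTop, ((m + (j + 1)).descFactorial (j + 1) : ℝ) /
        a (m + (j + 1)) ^ (j + 1) < lam⁻¹ ^ (j + 1) + 1 :=
      e4'.eventually_lt_const (lt_add_one _)
    have l2 : ∀ᶠ m : ℕ in atTop, (2 * lam)⁻¹ < (m : ℝ) / a (m + (j + 1)) :=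
      e5.eventually_const_lt (by
        rw [mul_inv]
        have := inv_pos.2 hlam
        linarith)
    filter_upwards [l1, l2] with m h1 h2
    refine Eventually.of_forall fun u => ?_
    have hpn : 0 ≤ ∏ i, (if 0 ≤ u i then Real.exp (-b * u i) else 0) :=
      Finset.prod_nonneg fun i _ => by split_ifs <;> positivity
    rw [norm_mul]
    refine mul_le_mul ?_ (f.norm_coe_le_norm u) (norm_nonneg _) (by positivity)
    by_cases hu : u ∈ chS (j + 1) 0 (a (m + (j + 1)))
    · rw [coef _ _ _ (ha _) _ hu]
      have hA := ha (m + (j + 1))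
      set A := a (m + (j + 1))
      have hul := hu.2.2 (Fin.last j)
      have hu0 := hu.1 (Fin.last j)
      have hx : 0 ≤ 1 + -u (Fin.last j) / A := by
        rw [neg_div]
        have := (div_le_one hA).2 hul
        linarith
      rw [Real.norm_of_nonneg (by positivity)]
      refine mul_le_mul h1.le ?_ (by positivity) (by positivity)
      simp only [hu.1, if_true]
      rw [← Real.exp_sum]
      calc (1 + -u (Fin.last j) / A) ^ m ≤ (Real.exp (-u (Fin.last j) / A)) ^ m := by
            refine pow_le_pow_left₀ hx ?_ m
            linarith [Real.add_one_le_exp (-u (Fin.last j) / A)]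
        _ = Real.exp (-(m / A * u (Fin.last j))) := by
            rw [← Real.exp_nat_mul]; congr 1; ring
        _ ≤ _ := by
            apply Real.exp_le_exp.2
            rw [← Finset.mul_sum, neg_mul]
            apply neg_le_neg
            have hs : ∑ i, u i ≤ (j + 1) * u (Fin.last j) := by
              have := Finset.sum_le_card_nsmul Finset.univ u (u (Fin.last j))
                (fun i _ => hu.2.1 (Fin.le_last i))
              simpa using this
            calc b * ∑ i, u i ≤ b * ((j + 1) * u (Fin.last j)) := by gcongr
              _ = (2 * lam)⁻¹ * u (Fin.last j) := by rw [hb]; field_simp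
              _ ≤ _ := by gcongr
    · have : dens j m (a (m + (j + 1))) u = 0 := Set.indicator_of_notMem hu _
      rw [this, mul_zero, norm_zero]
      positivity
  · refine Eventually.of_forall fun u => ?_
    refine Tendsto.mul_const _ ?_
    by_cases hu : u ∈ cone (j + 1)
    · have hl : limD lam j u = lam⁻¹ ^ (j + 1) * Real.exp (-u (Fin.last j) / lam) :=
        Set.indicator_of_mem hu _
      rw [hl]
      have hp : Tendsto (fun m : ℕ => (1 + -u (Fin.last j) / a (m + (j + 1))) ^ m) atTop
          (𝓝 (Real.exp (-u (Fin.last j) / lam))) := by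
        apply Real.tendsto_one_add_pow_exp_of_tendsto
        have := e5.mul_const (-u (Fin.last j))
        rw [mul_comm, ← div_eq_mul_inv] at this
        refine this.congr fun m => ?_
        ring
      refine (e4'.mul hp).congr' ?_
      filter_upwards [e3'.eventually_ge_atTop (u (Fin.last j))] with m hm
      rw [coef _ _ _ (ha _) _ ⟨hu.1, hu.2, fun i => (hu.2 (Fin.le_last i)).trans hm⟩]
    · have hl : limD lam j u = 0 := Set.indicator_of_notMem hu _
      rw [hl]
      refine tendsto_const_nhds.congr fun m => ?_
      have : dens j m (a (m + (j + 1))) u = 0 :=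
        Set.indicator_of_notMem (fun h => hu ⟨h.1, h.2.1⟩) _
      rw [this, mul_zero]
end

section
/- Let (a_n) be a sequence of positive reals with a_n = o(n), i.e. a_n/n → 0. For every fixed positive integer k, the pushforward of the normalized Lebesgue measure on the simplex Σ_n(a_n) = {y ∈ ℝ^n : y_i ≥ 0, Σ y_i ≤ a_n} under the projection y ↦ (y_1, …, y_k) converges weakly, as n → ∞, to the Dirac measure at the origin of ℝ^k. -/
open MeasureTheory Filter Topology

lemma simplex_meas (n : ℕ) (a : ℝ) :
    MeasurableSet {y : Fin n → ℝ | (∀ i, 0 ≤ y i) ∧ ∑ i, y i ≤ a} := by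
  apply IsClosed.measurableSet
  have h1 : IsClosed {y : Fin n → ℝ | ∀ i, 0 ≤ y i} := by
    simp only [Set.ofPred_forall]
    exact isClosed_iInter fun i => isClosed_le continuous_const (continuous_apply i)
  exact h1.inter (isClosed_le (f := fun y : Fin n → ℝ => ∑ i, y i) (by fun_prop) continuous_const)

lemma simplex_le {n : ℕ} {a : ℝ} {y : Fin n → ℝ} (h : (∀ i, 0 ≤ y i) ∧ ∑ i, y i ≤ a)
    (i : Fin n) : y i ≤ a :=
  (Finset.single_le_sum (fun j _ => h.1 j) (Finset.mem_univ i)).trans h.2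

lemma simplex_prob (n : ℕ) (a : ℝ) (ha : 0 < a) : IsProbabilityMeasure (simplexMeasure n a) := by
  constructor
  rw [simplexMeasure, Measure.smul_apply, Measure.restrict_apply_univ, smul_eq_mul]
  apply ENNReal.inv_mul_cancel
  · have hsub : {y : Fin n → ℝ | (∀ i, 0 < y i) ∧ ∑ i, y i < a} ⊆
        {y : Fin n → ℝ | (∀ i, 0 ≤ y i) ∧ ∑ i, y i ≤ a} :=
      fun y hy => ⟨fun i => (hy.1 i).le, hy.2.le⟩
    have ho : IsOpen {y : Fin n → ℝ | (∀ i, 0 < y i) ∧ ∑ i, y i < a} := by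
      have h1 : IsOpen {y : Fin n → ℝ | ∀ i, 0 < y i} := by
        simp only [Set.ofPred_forall]
        exact isOpen_iInter_of_finite fun i => isOpen_lt continuous_const (continuous_apply i)
      exact h1.inter (isOpen_lt (f := fun y : Fin n → ℝ => ∑ i, y i) (by fun_prop) continuous_const)
    have hne : {y : Fin n → ℝ | (∀ i, 0 < y i) ∧ ∑ i, y i < a}.Nonempty := by
      refine ⟨fun _ => a / (n + 1), fun i => by positivity, ?_⟩
      simp only [Finset.sum_const, Finset.card_univ, Fintype.card_fin, nsmul_eq_mul]
      rw [← mul_div_assoc, div_lt_iff₀ (by positivity)]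
      nlinarith
    exact ((ho.measure_pos volume hne).trans_le (measure_mono hsub)).ne'
  · have hsub : {y : Fin n → ℝ | (∀ i, 0 ≤ y i) ∧ ∑ i, y i ≤ a} ⊆
        Set.Icc (fun _ => 0) (fun _ => a) :=
      fun y hy => ⟨fun i => hy.1 i, fun i => simplex_le hy i⟩
    exact ((measure_mono hsub).trans_lt isCompact_Icc.measure_lt_top).ne

lemma simplex_ae (n : ℕ) (a : ℝ) :
    ∀ᵐ y ∂ simplexMeasure n a, (∀ i, 0 ≤ y i) ∧ ∑ i, y i ≤ a := by
  rw [simplexMeasure]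
  exact Measure.ae_smul_measure (ae_restrict_mem (simplex_meas n a)) _

lemma simplex_int (n : ℕ) (a : ℝ) (ha : 0 < a) (i : Fin n) :
    Integrable (fun y : Fin n → ℝ => y i) (simplexMeasure n a) := by
  have := simplex_prob n a ha
  refine Integrable.of_bound (measurable_pi_apply i).aestronglyMeasurable a ?_
  filter_upwards [simplex_ae n a] with y hy
  rw [Real.norm_eq_abs, abs_of_nonneg (hy.1 i)]
  exact simplex_le hy i

lemma simplex_symm (n : ℕ) (a : ℝ) (i j : Fin n) :
    ∫ y, y i ∂ simplexMeasure n a = ∫ y, y j ∂ simplexMeasure n a := by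
  let σ : Fin n ≃ Fin n := Equiv.swap i j
  have hσ := volume_measurePreserving_piCongrLeft (fun _ : Fin n => ℝ) σ
  have happ : ∀ (y : Fin n → ℝ) (l : Fin n),
      MeasurableEquiv.piCongrLeft (fun _ : Fin n => ℝ) σ y (σ l) = y l := by
    intro y l
    exact Equiv.piCongrLeft_apply_apply (fun _ : Fin n => ℝ) σ y l
  have hpre : MeasurableEquiv.piCongrLeft (fun _ : Fin n => ℝ) σ ⁻¹'
      {y : Fin n → ℝ | (∀ i, 0 ≤ y i) ∧ ∑ i, y i ≤ a} =
      {y : Fin n → ℝ | (∀ i, 0 ≤ y i) ∧ ∑ i, y i ≤ a} := by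
    ext y
    simp only [Set.mem_preimage, Set.mem_ofPred_eq]
    rw [← Equiv.sum_comp σ, ← σ.forall_congr_right]
    simp only [happ]
  have h := hσ.restrict_preimage (simplex_meas n a)
  rw [hpre] at h
  have h2 := h.integral_comp' (fun y : Fin n → ℝ => y j)
  rw [simplexMeasure, integral_smul_measure, integral_smul_measure, ← h2]
  congr 2
  ext y
  have := happ y i
  rw [show σ i = j from Equiv.swap_apply_left i j] at this
  exact this.symm

lemma simplex_mean (n : ℕ) (a : ℝ) (ha : 0 < a) (i : Fin n) :
    ∫ y, y i ∂ simplexMeasure n a ≤ a / n := by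
  have := simplex_prob n a ha
  have hn : 0 < (n : ℝ) := by exact_mod_cast i.pos
  have h1 : ∫ y, ∑ j, y j ∂ simplexMeasure n a ≤ a := by
    calc _ ≤ ∫ y, a ∂ simplexMeasure n a := by
          apply integral_mono_ae (integrable_finsetSum _ fun j _ => simplex_int n a ha j)
            (integrable_const _)
          filter_upwards [simplex_ae n a] with y hy using hy.2
      _ = a := by simp
  rw [integral_finsetSum _ fun j _ => simplex_int n a ha j,
    Finset.sum_congr rfl fun j _ => simplex_symm n a j i] at h1
  simp only [Finset.sum_const, Finset.card_univ, Fintype.card_fin, nsmul_eq_mul] at h1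
  rw [le_div_iff₀ hn]
  linarith

/-- If `a_n = o(n)`, the first `k` marginals of the normalized Lebesgue measures on the
simplices `Σ_n(a_n)` converge weakly to the Dirac measure at the origin of `ℝ^k`. -/
theorem stmt2 (a : ℕ → ℝ) (ha : ∀ n, 0 < a n)
    (hlim : Tendsto (fun n => a n / n) atTop (𝓝 0)) (k : ℕ) (hk : 0 < k) :
    ∀ f : BoundedContinuousFunction (Fin k → ℝ) ℝ,
      Tendsto
        (fun n => ∫ y, f (fun i : Fin k => if h : (i : ℕ) < n then y ⟨i, h⟩ else 0)
          ∂ simplexMeasure n (a n))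
        atTop
        (𝓝 (∫ x, f x ∂ Measure.dirac (0 : Fin k → ℝ))) := by
  intro f
  rw [integral_dirac]
  rw [Metric.tendsto_atTop]
  intro η hη
  obtain ⟨ε, hε, hf⟩ := Metric.continuousAt_iff.1
    (f.continuous.continuousAt (x := (0 : Fin k → ℝ))) (η / 2) (half_pos hη)
  set C : ℝ := 2 * ‖f‖ / ε with hC
  have hC0 : 0 ≤ C := by positivity
  have hlim2 : Tendsto (fun n => C * (k * (a n / n))) atTop (𝓝 0) := by
    simpa using (hlim.const_mul (k : ℝ)).const_mul C
  have hev := (hlim2.eventually (gt_mem_nhds (half_pos hη))).and (eventually_ge_atTop k)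
  obtain ⟨N, hN⟩ := eventually_atTop.1 hev
  refine ⟨N, fun n hn => ?_⟩
  obtain ⟨h1, hkn⟩ := hN n hn
  have := simplex_prob n (a n) (ha n)
  have hlt : ∀ i : Fin k, (i : ℕ) < n := fun i => i.2.trans_le hkn
  simp only [hlt, dite_true]
  have hint : Integrable (fun y : Fin n → ℝ => f (fun i : Fin k => y ⟨i, hlt i⟩))
      (simplexMeasure n (a n)) := by
    refine Integrable.of_bound (Continuous.aestronglyMeasurable (by fun_prop)) ‖f‖ ?_
    exact Eventually.of_forall fun y => f.norm_coe_le_norm _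
  have hsint : Integrable (fun y : Fin n → ℝ => ∑ i : Fin k, y ⟨i, hlt i⟩)
      (simplexMeasure n (a n)) :=
    integrable_finsetSum _ fun j _ => simplex_int n (a n) (ha n) _
  have heq : ∫ y, f (fun i : Fin k => y ⟨i, hlt i⟩) ∂ simplexMeasure n (a n) - f 0 =
      ∫ y, (f (fun i : Fin k => y ⟨i, hlt i⟩) - f 0) ∂ simplexMeasure n (a n) := by
    rw [integral_sub hint (integrable_const _)]
    simp
  rw [Real.dist_eq, heq, ← Real.norm_eq_abs]
  calc _ ≤ ∫ y, (η / 2 + C * ∑ i : Fin k, y ⟨i, hlt i⟩) ∂ simplexMeasure n (a n) := by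
        apply norm_integral_le_of_norm_le ((integrable_const _).add (hsint.const_mul _))
        filter_upwards [simplex_ae n (a n)] with y hy
        rw [Pi.add_apply]
        have hs0 : 0 ≤ ∑ i : Fin k, y ⟨i, hlt i⟩ := Finset.sum_nonneg fun i _ => hy.1 _
        by_cases hd : dist (fun i : Fin k => y ⟨i, hlt i⟩) 0 < ε
        · have := hf hd
          rw [dist_eq_norm] at this
          nlinarith [mul_nonneg hC0 hs0]
        · have hs : ε ≤ ∑ i : Fin k, y ⟨i, hlt i⟩ := by
            refine (not_lt.1 hd).trans ?_
            rw [dist_zero_right]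
            refine (pi_norm_le_iff_of_nonneg hs0).2 fun i => ?_
            rw [Real.norm_eq_abs, abs_of_nonneg (hy.1 _)]
            exact Finset.single_le_sum (f := fun i : Fin k => y ⟨i, hlt i⟩)
              (fun j _ => hy.1 _) (Finset.mem_univ i)
          have h3 : C * ε = 2 * ‖f‖ := by rw [hC]; field_simp
          have h4 := mul_le_mul_of_nonneg_left hs hC0
          have h5 := norm_sub_le (f (fun i : Fin k => y ⟨i, hlt i⟩)) (f 0)
          have h6 := f.norm_coe_le_norm (fun i : Fin k => y ⟨i, hlt i⟩)
          have h7 := f.norm_coe_le_norm 0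
          linarith
    _ = η / 2 + C * ∑ i : Fin k, ∫ y, y ⟨i, hlt i⟩ ∂ simplexMeasure n (a n) := by
        rw [integral_add (integrable_const _) (hsint.const_mul _), integral_const_mul,
          integral_finsetSum _ fun j _ => simplex_int n (a n) (ha n) _]
        simp
    _ ≤ η / 2 + C * (k * (a n / n)) := by
        gcongr
        calc _ ≤ ∑ i : Fin k, a n / n :=
              Finset.sum_le_sum fun i _ => simplex_mean n (a n) (ha n) _
          _ = _ := by simp
    _ < η := by linarith
end

section
/- Let (a_n) be a sequence of positive reals with a_n/n → ∞. For every fixed positive integer k and every bounded Borel set B ⊂ ℝ^k, the probability that (y_1, …, y_k) ∈ B, where y is distributed according to the normalized Lebesgue measure on the simplex Σ_n(a_n) = {y ∈ ℝ^n : y_i ≥ 0, Σ y_i ≤ a_n}, tends to 0 as n → ∞; that is, the marginal distributions of the first k coordinates converge vaguely to the zero measure. -/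
open MeasureTheory Filter Topology

def splx (n : ℕ) (a : ℝ) : Set (Fin n → ℝ) := {y : Fin n → ℝ | (∀ i, 0 ≤ y i) ∧ ∑ i, y i ≤ a}

lemma splx_vol_prod (m : ℕ) (I : Set ℝ) (T : Set (Fin m → ℝ)) :
    volume {y : Fin (m+1) → ℝ | y 0 ∈ I ∧ (fun i : Fin m => y i.succ) ∈ T}
      = volume I * volume T := by
  have h := volume_preserving_piFinSuccAbove (fun _ : Fin (m+1) => ℝ) 0
  have := h.measure_preimage_equiv (I ×ˢ T)
  rw [Measure.volume_eq_prod, Measure.prod_prod] at this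
  rw [← this]
  congr 1

lemma splx_upper (m : ℕ) (a M : ℝ) :
    volume (splx (m+1) a ∩ {y | y 0 ≤ M}) ≤ ENNReal.ofReal M * volume (splx m a) := by
  have := splx_vol_prod m (Set.Icc 0 M) (splx m a)
  rw [Real.volume_Icc, sub_zero] at this
  rw [← this]
  refine measure_mono ?_
  rintro y ⟨⟨h0, hs⟩, hM⟩
  rw [Fin.sum_univ_succ] at hs
  exact ⟨⟨h0 0, hM⟩, fun i => h0 _, by have := h0 0; show ∑ i : Fin m, y i.succ ≤ a; linarith⟩

open scoped Pointwise in
lemma splx_lower (m : ℕ) (a : ℝ) (ha : 0 < a) :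
    ENNReal.ofReal (a / (4 * (m+1))) * volume (splx m a) ≤ volume (splx (m+1) a) := by
  set r : ℝ := 1 - 1 / (2 * (m+1)) with hr
  have hm : (0:ℝ) < m + 1 := by positivity
  have hq : 1 / (2 * ((m:ℝ)+1)) ≤ 1/2 := by
    rw [div_le_div_iff₀ (by positivity) (by norm_num)]
    have : (0:ℝ) ≤ m := by positivity
    linarith
  have hr0 : 0 < r := by rw [hr]; linarith
  have hpow : 1/2 ≤ r ^ m := by
    have hb := one_add_mul_le_pow (a := -(1 / (2 * ((m:ℝ)+1)))) (by linarith) m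
    have e : 1 + -(1 / (2 * ((m:ℝ)+1))) = r := by rw [hr]; ring
    rw [e] at hb
    refine le_trans ?_ hb
    have : (m:ℝ) * (1 / (2 * ((m:ℝ)+1))) ≤ 1/2 := by
      rw [mul_one_div, div_le_div_iff₀ (by positivity) (by norm_num)]
      linarith
    linarith
  have h1 := splx_vol_prod m (Set.Icc 0 (a / (2 * (m+1)))) (r • splx m a)
  rw [Real.volume_Icc, sub_zero, Measure.addHaar_smul] at h1
  simp only [Module.finrank_fintype_fun_eq_card, Fintype.card_fin] at h1
  have h2 : volume {y : Fin (m+1) → ℝ | y 0 ∈ Set.Icc 0 (a / (2 * (m+1))) ∧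
      (fun i : Fin m => y i.succ) ∈ r • splx m a} ≤ volume (splx (m+1) a) := by
    refine measure_mono ?_
    rintro y ⟨⟨h0, h1⟩, z, ⟨hz0, hz⟩, hzy⟩
    have hzy' : ∀ i : Fin m, y i.succ = r * z i := fun i => (congrFun hzy i).symm
    refine ⟨fun i => ?_, ?_⟩
    · refine Fin.cases h0 (fun i => ?_) i
      rw [hzy']; exact mul_nonneg hr0.le (hz0 i)
    · rw [Fin.sum_univ_succ]
      simp only [hzy']
      rw [← Finset.mul_sum]
      have h3 : r * ∑ i, z i ≤ r * a := mul_le_mul_of_nonneg_left hz hr0.le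
      have h4 : r * a = a - a / (2 * (m+1)) := by rw [hr]; ring
      linarith
  rw [h1] at h2
  refine le_trans ?_ h2
  rw [← mul_assoc, ← ENNReal.ofReal_mul (by positivity)]
  gcongr
  rw [abs_of_nonneg (by positivity)]
  calc a / (4 * (m+1)) = a / (2 * (m+1)) * (1/2) := by field_simp; norm_num
    _ ≤ _ := by gcongr

lemma splx_ratio (m : ℕ) (a M : ℝ) (ha : 0 < a) (hM : 0 < M) :
    (volume (splx (m+1) a))⁻¹ * volume (splx (m+1) a ∩ {y | y 0 ≤ M})
      ≤ ENNReal.ofReal (4 * M * (a / ((m + 1 : ℕ) : ℝ))⁻¹) := by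
  have hc : 0 < a / (4 * ((m:ℝ)+1)) := by positivity
  have hV : (volume (splx (m+1) a))⁻¹ ≤
      (ENNReal.ofReal (a / (4 * (m+1))))⁻¹ * (volume (splx m a))⁻¹ := by
    rw [← ENNReal.mul_inv (Or.inl (by simpa using hc)) (Or.inl ENNReal.ofReal_ne_top)]
    exact ENNReal.inv_le_inv.2 (splx_lower m a ha)
  calc _ ≤ ((ENNReal.ofReal (a / (4 * (m+1))))⁻¹ * (volume (splx m a))⁻¹) *
        (ENNReal.ofReal M * volume (splx m a)) := by gcongr; exact splx_upper m a M
    _ = ((ENNReal.ofReal (a / (4 * (m+1))))⁻¹ * ENNReal.ofReal M) *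
        ((volume (splx m a))⁻¹ * volume (splx m a)) := by ring
    _ ≤ ((ENNReal.ofReal (a / (4 * (m+1))))⁻¹ * ENNReal.ofReal M) * 1 := by
        gcongr; exact ENNReal.inv_mul_le_one _
    _ = _ := by
        rw [mul_one, ← ENNReal.ofReal_inv_of_pos hc, ← ENNReal.ofReal_mul (by positivity)]
        congr 1; push_cast; field_simp

/-- If `a_n / n → ∞`, then for every bounded Borel set `B ⊆ ℝ^k` the probability that the
first `k` coordinates of a point distributed according to the normalized Lebesgue measure on
`Σ_n(a_n)` lie in `B` tends to `0`: the marginals converge vaguely to the zero measure. -/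
theorem stmt3 (a : ℕ → ℝ) (ha : ∀ n, 0 < a n)
    (hlim : Tendsto (fun n => a n / n) atTop atTop) (k : ℕ) (hk : 0 < k) :
    ∀ B : Set (Fin k → ℝ), MeasurableSet B → Bornology.IsBounded B →
      Tendsto
        (fun n => simplexMeasure n (a n)
          {y : Fin n → ℝ | (fun i : Fin k => if h : (i : ℕ) < n then y ⟨i, h⟩ else 0) ∈ B})
        atTop (𝓝 0) := by
  intro B _ hB
  obtain ⟨M, hM, hBM⟩ := hB.exists_pos_norm_le
  have hz : Tendsto (fun n : ℕ => ENNReal.ofReal (4 * M * (a n / (n : ℝ))⁻¹)) atTop (𝓝 0) := by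
    have := (tendsto_inv_atTop_zero.comp hlim).const_mul (4 * M)
    simpa using ENNReal.tendsto_ofReal this
  refine tendsto_of_tendsto_of_tendsto_of_le_of_le' tendsto_const_nhds hz
    (Eventually.of_forall fun n => zero_le) ?_
  filter_upwards [eventually_ge_atTop 1] with n hn
  obtain ⟨m, rfl⟩ : ∃ m, n = m + 1 := ⟨n - 1, by omega⟩
  refine le_trans ?_ (splx_ratio m (a (m+1)) M (ha _) hM)
  refine le_trans (measure_mono (t := {y : Fin (m+1) → ℝ | y 0 ≤ M}) ?_) ?_
  · intro y hy
    have h1 := (norm_le_pi_norm _ (⟨0, hk⟩ : Fin k)).trans (hBM _ hy)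
    simp only [Nat.succ_pos, dif_pos] at h1
    exact (le_abs_self _).trans h1
  · rw [simplexMeasure, Measure.smul_apply, Measure.restrict_apply
      (measurableSet_le (by fun_prop) (by fun_prop)), smul_eq_mul, Set.inter_comm]
    exact le_rfl
end

section
/- Let a > 0 and let n ≥ k ≥ 1 be integers. The pushforward of the normalized Lebesgue measure on the simplex Σ_n(a) = {y ∈ ℝ^n : y_i ≥ 0, Σ y_i ≤ a} under the projection y ↦ (y_1, …, y_k) is absolutely continuous with respect to Lebesgue measure on ℝ^k, with density at a point (y_1, …, y_k) with all y_i ≥ 0 and s := y_1 + … + y_k ≤ a equal to (1 − s/a)^{n−k} · n(n−1)⋯(n−k+1)/a^k, and density 0 elsewhere. -/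
open MeasureTheory Filter Topology

def sxA (n : ℕ) (a : ℝ) : Set (Fin n → ℝ) := {y : Fin n → ℝ | (∀ i, 0 ≤ y i) ∧ ∑ i, y i ≤ a}

theorem sxA_meas (n : ℕ) (a : ℝ) : MeasurableSet (sxA n a) := by
  refine MeasurableSet.inter ?_ ?_
  · change MeasurableSet {y : Fin n → ℝ | ∀ i, 0 ≤ y i}
    simp only [Set.ofPred_forall]
    exact MeasurableSet.iInter fun i => measurableSet_le measurable_const (measurable_pi_apply i)
  · change MeasurableSet {y : Fin n → ℝ | ∑ i, y i ≤ a}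
    exact measurableSet_le (by fun_prop) measurable_const

theorem sxA_empty (n : ℕ) (a : ℝ) (ha : a < 0) : sxA n a = ∅ := by
  ext y
  simp only [sxA, Set.mem_ofPred_eq, Set.mem_empty_iff_false, iff_false, not_and, not_le]
  intro h
  exact ha.trans_le (Finset.sum_nonneg fun i _ => h i)

theorem sxA_integral (n : ℕ) (a : ℝ) :
    ∫ x in (0:ℝ)..a, (a - x) ^ n / (n.factorial : ℝ) = a ^ (n+1) / ((n+1).factorial : ℝ) := by
  rw [intervalIntegral.integral_div,
    intervalIntegral.integral_comp_sub_left (fun x => x ^ n) a]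
  simp [Nat.factorial_succ]
  field_simp

theorem sxA_vol (n : ℕ) : ∀ a : ℝ, 0 ≤ a →
    volume (sxA n a) = ENNReal.ofReal (a ^ n / (n.factorial : ℝ)) := by
  induction n with
  | zero =>
    intro a ha
    have : sxA 0 a = Set.univ := by
      ext y; simp [sxA, ha]
    rw [this]
    simp [volume_pi]
  | succ n ih =>
    intro a ha
    let T : Set (ℝ × (Fin n → ℝ)) := {p | 0 ≤ p.1 ∧ (∀ i, 0 ≤ p.2 i) ∧ ∑ i, p.2 i ≤ a - p.1}
    have hT : MeasurableSet T := by
      refine (measurableSet_le measurable_const measurable_fst).inter (MeasurableSet.inter ?_ ?_)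
      · change MeasurableSet {y : ℝ × (Fin n → ℝ) | ∀ i, 0 ≤ y.2 i}
        simp only [Set.ofPred_forall]
        exact MeasurableSet.iInter fun i => measurableSet_le measurable_const (by fun_prop)
      · change MeasurableSet {p : ℝ × (Fin n → ℝ) | ∑ i, p.2 i ≤ a - p.1}
        exact measurableSet_le (by fun_prop) (by fun_prop)
    have h1 : sxA (n+1) a = (MeasurableEquiv.piFinSuccAbove (fun _ => ℝ) 0) ⁻¹' T := by
      ext y
      simp [sxA, T, Fin.forall_fin_succ, Fin.sum_univ_succ, and_assoc, le_sub_iff_add_le',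
        MeasurableEquiv.piFinSuccAbove, Fin.insertNthEquiv, Fin.removeNth, Fin.tail]
    rw [h1, (volume_preserving_piFinSuccAbove (fun _ : Fin (n+1) => ℝ) 0).measure_preimage_equiv,
      Measure.volume_eq_prod, Measure.prod_apply hT]
    have h2 : ∀ x : ℝ, volume (Prod.mk x ⁻¹' T) =
        (Set.Icc 0 a).indicator (fun x => ENNReal.ofReal ((a - x) ^ n / (n.factorial : ℝ))) x := by
      intro x
      by_cases hx : x ∈ Set.Icc 0 a
      · rw [Set.indicator_of_mem hx, ← ih _ (sub_nonneg.2 hx.2)]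
        congr 1
        ext y
        simp [T, sxA, hx.1]
      · rw [Set.indicator_of_notMem hx]
        convert measure_empty (μ := (volume : Measure (Fin n → ℝ)))
        by_cases h0 : 0 ≤ x
        · have : a - x < 0 := by
            by_contra h
            exact hx ⟨h0, by linarith⟩
          rw [← sxA_empty n _ this]
          ext y
          simp [T, sxA, h0]
        · ext y
          simp [T, h0]
    simp_rw [h2]
    rw [lintegral_indicator measurableSet_Icc, ← ofReal_integral_eq_lintegral_ofReal]
    · rw [← sxA_integral, intervalIntegral.integral_of_le ha, integral_Icc_eq_integral_Ioc]
    · exact (by fun_prop : Continuous fun x : ℝ => (a - x) ^ n / (n.factorial : ℝ)).integrableOn_Icc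
    · filter_upwards [ae_restrict_mem measurableSet_Icc] with x hx
      have := sub_nonneg.2 hx.2
      simp only [Pi.zero_apply]
      positivity

theorem sxA_proj (a : ℝ) (k m : ℕ) (E : Set (Fin k → ℝ)) (hE : MeasurableSet E) :
    volume ((fun y : Fin (k+m) → ℝ => fun i : Fin k => y (Fin.castAdd m i)) ⁻¹' E ∩ sxA (k+m) a) =
      ∫⁻ y in E, (sxA k a).indicator
        (fun y => ENNReal.ofReal ((a - ∑ i, y i) ^ m / (m.factorial : ℝ))) y := by
  let T : Set ((Fin k → ℝ) × (Fin m → ℝ)) :=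
    {p | p.1 ∈ E ∧ (∀ i, 0 ≤ p.1 i) ∧ (∀ i, 0 ≤ p.2 i) ∧ ∑ i, p.2 i ≤ a - ∑ i, p.1 i}
  have hT : MeasurableSet T := by
    refine (measurable_fst hE).inter (MeasurableSet.inter ?_ (MeasurableSet.inter ?_ ?_))
    · change MeasurableSet {y : (Fin k → ℝ) × (Fin m → ℝ) | ∀ i, 0 ≤ y.1 i}
      simp only [Set.ofPred_forall]
      exact MeasurableSet.iInter fun i => measurableSet_le measurable_const (by fun_prop)
    · change MeasurableSet {y : (Fin k → ℝ) × (Fin m → ℝ) | ∀ i, 0 ≤ y.2 i}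
      simp only [Set.ofPred_forall]
      exact MeasurableSet.iInter fun i => measurableSet_le measurable_const (by fun_prop)
    · change MeasurableSet {p : (Fin k → ℝ) × (Fin m → ℝ) | ∑ i, p.2 i ≤ a - ∑ i, p.1 i}
      exact measurableSet_le (by fun_prop) (by fun_prop)
  have e1 := volume_measurePreserving_sumPiEquivProdPi_symm (fun _ : Fin k ⊕ Fin m => ℝ)
  have e2 := volume_measurePreserving_piCongrLeft (fun _ : Fin (k+m) => ℝ)
    (finSumFinEquiv (m := k) (n := m))
  rw [← e2.measure_preimage_equiv, ← e1.measure_preimage_equiv]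
  have hl : ∀ (x : Fin k ⊕ Fin m → ℝ) i, MeasurableEquiv.piCongrLeft (fun _ : Fin (k+m) => ℝ)
      (finSumFinEquiv (m := k) (n := m)) x (Fin.castAdd m i) = x (Sum.inl i) := by
    intro x i
    rw [← finSumFinEquiv_apply_left]
    exact Equiv.piCongrLeft_apply_apply (fun _ : Fin (k+m) => ℝ) finSumFinEquiv x (Sum.inl i)
  have hr : ∀ (x : Fin k ⊕ Fin m → ℝ) i, MeasurableEquiv.piCongrLeft (fun _ : Fin (k+m) => ℝ)
      (finSumFinEquiv (m := k) (n := m)) x (Fin.natAdd k i) = x (Sum.inr i) := by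
    intro x i
    rw [← finSumFinEquiv_apply_right]
    exact Equiv.piCongrLeft_apply_apply (fun _ : Fin (k+m) => ℝ) finSumFinEquiv x (Sum.inr i)
  have h1 : (MeasurableEquiv.sumPiEquivProdPi (fun _ : Fin k ⊕ Fin m => ℝ)).symm ⁻¹'
      ((MeasurableEquiv.piCongrLeft (fun _ : Fin (k+m) => ℝ)
        (finSumFinEquiv (m := k) (n := m))) ⁻¹'
      ((fun y : Fin (k+m) → ℝ => fun i : Fin k => y (Fin.castAdd m i)) ⁻¹' E ∩ sxA (k+m) a))
      = T := by
    ext p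
    simp only [Set.mem_preimage, Set.mem_inter_iff, sxA, Set.mem_ofPred_eq, T, Fin.sum_univ_add,
      hl, hr, Fin.forall_fin_add, and_assoc]
    simp only [MeasurableEquiv.coe_sumPiEquivProdPi_symm, Equiv.sumPiEquivProdPi_symm_apply,
      le_sub_iff_add_le']
  rw [h1, Measure.volume_eq_prod, Measure.prod_apply hT, ← lintegral_indicator hE]
  refine lintegral_congr fun x => ?_
  by_cases hx : x ∈ E
  · rw [Set.indicator_of_mem hx]
    by_cases hs : x ∈ sxA k a
    · rw [Set.indicator_of_mem hs, ← sxA_vol _ _ (sub_nonneg.2 hs.2)]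
      congr 1
      ext y
      simp [T, sxA, hx, hs.1]
    · rw [Set.indicator_of_notMem hs]
      convert measure_empty (μ := (volume : Measure (Fin m → ℝ)))
      by_cases h0 : ∀ i, 0 ≤ x i
      · have : a - ∑ i, x i < 0 := by
          by_contra h
          exact hs ⟨h0, by linarith⟩
        rw [← sxA_empty m _ this]
        ext y
        simp [T, sxA, h0, hx]
      · ext y
        simp [T, h0]
  · rw [Set.indicator_of_notMem hx]
    convert measure_empty (μ := (volume : Measure (Fin m → ℝ)))
    ext y
    simp [T, hx]

/-- The pushforward of the normalized Lebesgue measure on `Σ_n(a)` under the projection to the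
first `k` coordinates has density `(1 - s/a)^(n-k) · n(n-1)⋯(n-k+1) / a^k` (with
`s = y_1 + … + y_k`) at points of `Σ_k(a)`, and density `0` elsewhere. -/
theorem stmt4 (a : ℝ) (ha : 0 < a) (n k : ℕ) (hk : 1 ≤ k) (hkn : k ≤ n) :
    Measure.map (fun y : Fin n → ℝ => fun i : Fin k => y (Fin.castLE hkn i))
        (simplexMeasure n a) =
      volume.withDensity (fun y : Fin k → ℝ =>
        if (∀ i, 0 ≤ y i) ∧ ∑ i, y i ≤ a then
          ENNReal.ofReal ((1 - (∑ i, y i) / a) ^ (n - k) * (n.descFactorial k : ℝ) / a ^ k)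
        else 0) := by
  obtain ⟨m, rfl⟩ := Nat.exists_eq_add_of_le hkn
  have hmeas : Measurable (fun y : Fin (k+m) → ℝ => fun i : Fin k => y (Fin.castLE hkn i)) := by
    fun_prop
  ext E hE
  rw [Measure.map_apply hmeas hE, withDensity_apply _ hE]
  change ((volume (sxA (k+m) a))⁻¹ • volume.restrict (sxA (k+m) a)) _ = _
  rw [Measure.smul_apply, Measure.restrict_apply (hmeas hE)]
  have h := sxA_proj a k m E hE
  change volume ((fun y : Fin (k+m) → ℝ => fun i : Fin k => y (Fin.castLE hkn i)) ⁻¹' E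
    ∩ sxA (k+m) a) = _ at h
  rw [h, smul_eq_mul, sxA_vol _ _ ha.le, ← ENNReal.ofReal_inv_of_pos (by positivity),
    ← lintegral_const_mul' _ _ ENNReal.ofReal_ne_top]
  refine lintegral_congr fun y => ?_
  by_cases hy : y ∈ sxA k a
  · rw [Set.indicator_of_mem hy, if_pos (show (∀ i, 0 ≤ y i) ∧ ∑ i, y i ≤ a from hy), ← ENNReal.ofReal_mul (by positivity)]
    congr 1
    have hf : ((m.factorial : ℝ)) * ((k+m).descFactorial k : ℝ) = ((k+m).factorial : ℝ) := by
      have := Nat.factorial_mul_descFactorial hkn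
      rw [Nat.add_sub_cancel_left] at this
      exact_mod_cast this
    have hm : (m.factorial : ℝ) ≠ 0 := by positivity
    rw [Nat.add_sub_cancel_left, ← hf, one_sub_div ha.ne', div_pow, pow_add]
    field_simp
  · rw [Set.indicator_of_notMem hy, if_neg (show ¬ ((∀ i, 0 ≤ y i) ∧ ∑ i, y i ≤ a) from hy), mul_zero]
end
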